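/- arXiv:1510.04911 — 9 statements merged into one kernel-verified Lean document; each statement's English description precedes it below -/
import Mathlib

section
/- Let p, q, r be positive integers with gcd(q,r) = 1. For every integer j with 0 ≤ j < pqr, the coefficient a_j of X^j in Q_{p,q,r} equals r_{q,r}(j) − r_{q,r}(j−1), where r_{q,r}(−1) is interpreted as 0. -/
open Polynomial

/-- `repCount q r n` is the number of pairs `(l, m)` of nonnegative integers with
`l*q + m*r = n`. -/
noncomputable def repCount (q r n : ℕ) : ℕ := Nat.card {lm : ℕ × ℕ // lm.1 * q + lm.2 * r = n}

/-!
In the ring of formal power series, `1 / ((1 - X ^ q) * (1 - X ^ r))` is the product of two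
geometric series, and its `n`-th coefficient counts the representations `n = l * q + m * r`.
Multiplying by `1 - X` takes first differences of the coefficients, and multiplying by `1 - X ^ N`
does not affect the coefficients of index less than `N`.
-/

section GeneratingFunction

open scoped PowerSeries

variable {R : Type*} {q r : ℕ}

theorem coeff_one_sub_X_mul [Ring R] (F : R⟦X⟧) (n : ℕ) :
    PowerSeries.coeff n ((1 - PowerSeries.X) * F) =
      PowerSeries.coeff n F - if n = 0 then 0 else PowerSeries.coeff (n - 1) F := by
  cases n <;> simp [sub_mul, PowerSeries.coeff_succ_X_mul]

theorem coeff_one_sub_X_pow_mul_of_lt [Ring R] (F : R⟦X⟧) {N n : ℕ} (hn : n < N) :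
    PowerSeries.coeff n ((1 - PowerSeries.X ^ N) * F) = PowerSeries.coeff n F := by
  rw [sub_mul, one_mul, map_sub, PowerSeries.coeff_X_pow_mul', if_neg hn.not_ge, sub_zero]

theorem repCount_eq_card_filter_antidiagonal (hq : q ≠ 0) (hr : r ≠ 0) (n : ℕ) :
    repCount q r n = {x ∈ Finset.HasAntidiagonal.antidiagonal n | q ∣ x.1 ∧ r ∣ x.2}.card := by
  rw [repCount, ← Nat.card_eq_finsetCard]
  refine Nat.card_eq_of_bijective
    (fun lm => ⟨(lm.1.1 * q, lm.1.2 * r), by simp [lm.2]⟩) ⟨?injective, ?surjective⟩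
  case injective =>
    rintro ⟨⟨l, m⟩, _⟩ ⟨⟨l', m'⟩, _⟩ heq
    simpa [hq, hr] using heq
  case surjective =>
    rintro ⟨⟨a, b⟩, hab⟩
    simp only [Finset.mem_filter, Finset.HasAntidiagonal.mem_antidiagonal] at hab
    obtain ⟨hsum, ⟨l, rfl⟩, ⟨m, rfl⟩⟩ := hab
    exact ⟨⟨(l, m), by simpa only [mul_comm] using hsum⟩, by simp only [mul_comm]⟩

variable (R)

/-- The generating function `∑ r_{q,r}(n) X ^ n` of the representation counts. It is the
inverse of `(1 - X ^ q) * (1 - X ^ r)` when `q` and `r` are nonzero; otherwise `repCount` takes the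
junk value `0` wherever there are infinitely many representations. -/
noncomputable def repSeries [Semiring R] (q r : ℕ) : R⟦X⟧ :=
  PowerSeries.mk fun n => (repCount q r n : R)

variable [CommRing R]

theorem one_sub_X_pow_mul_expand_mk_one (hq : q ≠ 0) :
    (1 - PowerSeries.X ^ q) * PowerSeries.expand q hq (PowerSeries.mk 1) = (1 : R⟦X⟧) := by
  simpa [mul_comm] using
    congrArg (PowerSeries.expand q hq) (PowerSeries.mk_one_mul_one_sub_eq_one R)

theorem expand_mk_one_mul_expand_mk_one (hq : q ≠ 0) (hr : r ≠ 0) :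
    PowerSeries.expand q hq (PowerSeries.mk 1) * PowerSeries.expand r hr (PowerSeries.mk 1) =
      repSeries R q r := by
  ext n
  simp [repSeries, PowerSeries.coeff_mul, PowerSeries.coeff_expand,
    repCount_eq_card_filter_antidiagonal hq hr, ← ite_and, and_comm]

theorem one_sub_X_pow_mul_one_sub_X_pow_mul_repSeries (hq : q ≠ 0) (hr : r ≠ 0) :
    (1 - PowerSeries.X ^ q) * (1 - PowerSeries.X ^ r) * repSeries R q r = 1 := by
  rw [← expand_mk_one_mul_expand_mk_one R hq hr, mul_mul_mul_comm,
    one_sub_X_pow_mul_expand_mk_one, one_sub_X_pow_mul_expand_mk_one, one_mul]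

variable {R}

theorem stmt_2_general (hq : q ≠ 0) (hr : r ≠ 0) {N : ℕ} {F : R⟦X⟧}
    (hF : (1 - PowerSeries.X ^ q) * (1 - PowerSeries.X ^ r) * F =
      (1 - PowerSeries.X) * (1 - PowerSeries.X ^ N))
    {j : ℕ} (hj : j < N) :
    PowerSeries.coeff j F =
      (repCount q r j : R) - if j = 0 then 0 else (repCount q r (j - 1) : R) := by
  have hinv := one_sub_X_pow_mul_one_sub_X_pow_mul_repSeries R hq hr
  have hF_eq : F = (1 - PowerSeries.X ^ N) * ((1 - PowerSeries.X) * repSeries R q r) := by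
    linear_combination repSeries R q r * hF - F * hinv
  rw [hF_eq, coeff_one_sub_X_pow_mul_of_lt _ hj, coeff_one_sub_X_mul]
  simp only [repSeries, PowerSeries.coeff_mk]

end GeneratingFunction

/-- For `0 ≤ j < pqr`, the coefficient `a_j` of the quotient polynomial
`Q = (1-X)(1-X^(pqr))/((1-X^q)(1-X^r))` equals `r_{q,r}(j) - r_{q,r}(j-1)`,
where `r_{q,r}(-1)` is interpreted as `0`. -/
theorem stmt_2 (p q r : ℕ) (hp : 0 < p) (hq : 0 < q) (hr : 0 < r)
    (hqr : Nat.gcd q r = 1) (Q : ℤ[X])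
    (hQ : (1 - X ^ q) * (1 - X ^ r) * Q = (1 - X) * (1 - X ^ (p * q * r)))
    (j : ℕ) (hj : j < p * q * r) :
    Q.coeff j =
      (repCount q r j : ℤ) - (if j = 0 then 0 else (repCount q r (j - 1) : ℤ)) := by
  rw [← Polynomial.coeff_coe]
  exact stmt_2_general hq.ne' hr.ne' (by simpa using congrArg Polynomial.toPowerSeries hQ) hj
end

section
/- Let q and r be coprime integers with q ≥ 2 and r ≥ 2. For each integer ℓ with 0 ≤ ℓ ≤ r−2, let m_ℓ denote the smallest nonnegative integer m such that ℓq + mr ≥ (q−1)(r−1). Then the set {ℓq + m_ℓ r : ℓ = 0, …, r−2} equals the set {(q−1)(r−1) + k : k = 0, …, r−2}. -/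
/-!
Put `c = (q - 1)(r - 1)`. Minimality of `m ℓ` places `ℓq + (m ℓ)r` in the window `[c, c + r)` of
length `r`. By coprimality the residues of `ℓq` modulo `r` are distinct for `ℓ < r`, and the last
point `c + r - 1` of the window equals `(r - 1)q`, the value belonging to the omitted index
`ℓ = r - 1`. So the `r - 1` distinct values with `ℓ ≤ r - 2` fill the remaining `r - 1` points.
-/

theorem eq_of_mul_add_mul_eq_of_coprime {q r a b x y : ℕ} (hqr : q.Coprime r)
    (ha : a < r) (hb : b < r) (h : a * q + x * r = b * q + y * r) : a = b := by
  have mul_modEq : a * q ≡ b * q [MOD r] := by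
    simpa [Nat.ModEq] using congrArg (· % r) h
  exact (Nat.ModEq.cancel_right_of_coprime hqr.symm mul_modEq).eq_of_lt_of_lt ha hb

theorem injOn_mul_add_mul_of_coprime {q r : ℕ} (hqr : q.Coprime r) (m : ℕ → ℕ) :
    Set.InjOn (fun ℓ => ℓ * q + m ℓ * r) (Set.Iio r) :=
  fun _ ha _ hb h => eq_of_mul_add_mul_eq_of_coprime hqr ha hb h

theorem add_mul_lt_add_of_isLeast {a c r x : ℕ} (ha : a < c + r)
    (hx : IsLeast {y : ℕ | c ≤ a + y * r} x) : a + x * r < c + r := by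
  cases x with
  | zero => simpa using ha
  | succ y =>
    have lt_threshold : a + y * r < c :=
      not_le.mp fun hy => y.lt_succ_self.not_ge (hx.2 hy)
    linarith [Nat.succ_mul y r]

theorem pred_mul_pred_add_pred {q : ℕ} (hq : 0 < q) (r : ℕ) :
    (q - 1) * (r - 1) + (r - 1) = (r - 1) * q := by
  rw [← Nat.succ_mul, Nat.succ_eq_add_one, Nat.sub_add_cancel hq, mul_comm]

theorem mul_add_mul_mem_Ico_of_isLeast {q r ℓ x : ℕ} (hq : 0 < q) (hqr : q.Coprime r)
    (hℓ : ℓ < r - 1) (hx : IsLeast {y : ℕ | (q - 1) * (r - 1) ≤ ℓ * q + y * r} x) :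
    ℓ * q + x * r ∈ Finset.Ico ((q - 1) * (r - 1)) ((q - 1) * (r - 1) + (r - 1)) := by
  have last_eq := pred_mul_pred_add_pred hq r
  have lt_window_end : ℓ * q + x * r < (q - 1) * (r - 1) + r := by
    refine add_mul_lt_add_of_isLeast ?_ hx
    have := Nat.mul_le_mul_right q hℓ.le
    omega
  have ne_last : ℓ * q + x * r ≠ (r - 1) * q := fun h =>
    hℓ.ne (eq_of_mul_add_mul_eq_of_coprime (y := 0) hqr (by omega) (by omega) (by simpa using h))
  exact Finset.mem_Ico.mpr ⟨hx.1, by omega⟩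

/-- Let `q, r ≥ 2` be coprime and for `0 ≤ ℓ ≤ r-2` let `m ℓ` be the least
nonnegative integer `x` with `ℓq + xr ≥ (q-1)(r-1)`. Then
`{ℓq + (m ℓ)r : ℓ = 0, …, r-2} = {(q-1)(r-1) + k : k = 0, …, r-2}`. -/
theorem stmt_9 (q r : ℕ) (hq : 2 ≤ q) (hr : 2 ≤ r) (hqr : Nat.gcd q r = 1)
    (m : ℕ → ℕ)
    (hm : ∀ ℓ ≤ r - 2, IsLeast {x : ℕ | (q - 1) * (r - 1) ≤ ℓ * q + x * r} (m ℓ)) :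
    Finset.image (fun ℓ => ℓ * q + m ℓ * r) (Finset.range (r - 1)) =
    Finset.image (fun k => (q - 1) * (r - 1) + k) (Finset.range (r - 1)) := by
  rw [Finset.range_eq_Ico, Finset.image_add_left_Ico, add_zero, ← Finset.range_eq_Ico]
  apply Finset.eq_of_subset_of_card_le
  · refine Finset.image_subset_iff.mpr fun ℓ hℓ => ?_
    have ℓ_lt : ℓ < r - 1 := Finset.mem_range.mp hℓ
    exact mul_add_mul_mem_Ico_of_isLeast (by omega) hqr ℓ_lt (hm ℓ (by omega))
  · have injOn : Set.InjOn (fun ℓ => ℓ * q + m ℓ * r) (Finset.range (r - 1)) :=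
      (injOn_mul_add_mul_of_coprime hqr m).mono fun ℓ hℓ =>
        (Finset.mem_range.mp hℓ).trans_le (Nat.sub_le r 1)
    rw [Finset.card_image_of_injOn injOn, Nat.card_Ico, Finset.card_range,
      Nat.add_sub_cancel_left]
end

section
/- Let T1, T2, T3 be positive integers with gcd(T1,T2,T3) = 1, and set d12 = gcd(T1,T2), d23 = gcd(T2,T3), d13 = gcd(T1,T3). Then (1−X^{d12})(1−X^{d23})(1−X^{d13}) divides (1−X^{T1})(1−X^{T2})(1−X^{T3}) in ℤ[X], and the quotient polynomial P_3 has degree T1+T2+T3−d12−d23−d13 and all its coefficients are nonnegative. -/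
open Polynomial

/-!
If `d ∣ T`, then `1 - X ^ T` is `1 - X ^ d` times the geometric sum
`1 + X ^ d + ⋯ + X ^ (T - d)`, whose coefficients are nonnegative. Pairing `d12` with `T1`, `d23`
with `T2` and `d13` with `T3` therefore exhibits the quotient as a product of three such sums.
-/

section NonnegCoeffs

variable (R : Type*) [Semiring R] [PartialOrder R] [IsOrderedRing R]

/-- The polynomials all of whose coefficients are nonnegative. They are bundled as a subsemiring,
so that closure under finite sums and products comes from the library. -/
def nonnegCoeffs : Subsemiring R[X] where
  carrier := {p | ∀ k, 0 ≤ p.coeff k}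
  zero_mem' k := by rw [coeff_zero]
  one_mem' k := by rw [coeff_one]; split_ifs <;> simp
  add_mem' hp hq k := by rw [coeff_add]; exact add_nonneg (hp k) (hq k)
  mul_mem' hp hq k := by
    rw [coeff_mul]
    exact Finset.sum_nonneg fun _ _ => mul_nonneg (hp _) (hq _)

theorem X_mem_nonnegCoeffs : (X : R[X]) ∈ nonnegCoeffs R := fun k => by
  rw [coeff_X]; split_ifs <;> simp

end NonnegCoeffs

theorem one_sub_X_pow_mul_geom_sum {R : Type*} [Ring R] {d T : ℕ} (hdT : d ∣ T) :
    (1 - X ^ d : R[X]) * ∑ j ∈ Finset.range (T / d), (X ^ d) ^ j = 1 - X ^ T := by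
  rw [mul_neg_geom_sum, ← pow_mul, Nat.mul_div_cancel' hdT]

section OneSubXPow

variable {R : Type*} [Ring R] [Nontrivial R]

theorem natDegree_one_sub_X_pow (n : ℕ) : (1 - X ^ n : R[X]).natDegree = n := by
  rw [natDegree_sub, ← C_1, natDegree_X_pow_sub_C]

theorem one_sub_X_pow_ne_zero {n : ℕ} (hn : n ≠ 0) : (1 - X ^ n : R[X]) ≠ 0 :=
  ne_zero_of_natDegree_gt (n := 0) (by rw [natDegree_one_sub_X_pow]; exact hn.pos)

end OneSubXPow

section Products

variable {ι R : Type*} [CommRing R] {s : Finset ι} {d T : ι → ℕ}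

theorem prod_one_sub_X_pow_mul_prod_geom_sum (hdT : ∀ i ∈ s, d i ∣ T i) :
    (∏ i ∈ s, (1 - X ^ d i) : R[X]) *
        ∏ i ∈ s, ∑ j ∈ Finset.range (T i / d i), (X ^ d i) ^ j =
      ∏ i ∈ s, (1 - X ^ T i) := by
  rw [← Finset.prod_mul_distrib]
  exact Finset.prod_congr rfl fun i hi => one_sub_X_pow_mul_geom_sum (hdT i hi)

variable [IsDomain R]

theorem prod_one_sub_X_pow_ne_zero (hT : ∀ i ∈ s, T i ≠ 0) :
    (∏ i ∈ s, (1 - X ^ T i) : R[X]) ≠ 0 :=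
  Finset.prod_ne_zero_iff.2 fun i hi => one_sub_X_pow_ne_zero (hT i hi)

theorem natDegree_prod_one_sub_X_pow (hT : ∀ i ∈ s, T i ≠ 0) :
    (∏ i ∈ s, (1 - X ^ T i) : R[X]).natDegree = ∑ i ∈ s, T i := by
  rw [natDegree_prod _ _ fun i hi => one_sub_X_pow_ne_zero (hT i hi)]
  simp only [natDegree_one_sub_X_pow]

theorem natDegree_of_prod_one_sub_X_pow_mul_eq {P : R[X]} (hd : ∀ i ∈ s, d i ≠ 0)
    (hT : ∀ i ∈ s, T i ≠ 0)
    (hP : (∏ i ∈ s, (1 - X ^ d i)) * P = ∏ i ∈ s, (1 - X ^ T i)) :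
    P.natDegree = ∑ i ∈ s, T i - ∑ i ∈ s, d i := by
  have hP0 : P ≠ 0 := right_ne_zero_of_mul (hP ▸ prod_one_sub_X_pow_ne_zero hT)
  have hdeg := congrArg natDegree hP
  rw [natDegree_mul (prod_one_sub_X_pow_ne_zero hd) hP0, natDegree_prod_one_sub_X_pow hd,
    natDegree_prod_one_sub_X_pow hT] at hdeg
  exact Nat.eq_sub_of_add_eq' hdeg

theorem mem_nonnegCoeffs_of_prod_one_sub_X_pow_mul_eq [PartialOrder R] [IsOrderedRing R] {P : R[X]}
    (hd : ∀ i ∈ s, d i ≠ 0) (hdT : ∀ i ∈ s, d i ∣ T i)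
    (hP : (∏ i ∈ s, (1 - X ^ d i)) * P = ∏ i ∈ s, (1 - X ^ T i)) :
    P ∈ nonnegCoeffs R := by
  have hP_eq : P = ∏ i ∈ s, ∑ j ∈ Finset.range (T i / d i), (X ^ d i) ^ j :=
    mul_left_cancel₀ (prod_one_sub_X_pow_ne_zero hd)
      (hP.trans (prod_one_sub_X_pow_mul_prod_geom_sum hdT).symm)
  rw [hP_eq]
  exact prod_mem fun i _ => sum_mem fun j _ => pow_mem (pow_mem (X_mem_nonnegCoeffs R) _) _

theorem stmt_10_general [PartialOrder R] [IsOrderedRing R]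
    (hT : ∀ i ∈ s, T i ≠ 0) (hdT : ∀ i ∈ s, d i ∣ T i) :
    (∏ i ∈ s, (1 - X ^ d i) : R[X]) ∣ ∏ i ∈ s, (1 - X ^ T i) ∧
    ∀ P : R[X], (∏ i ∈ s, (1 - X ^ d i)) * P = ∏ i ∈ s, (1 - X ^ T i) →
      P.natDegree = ∑ i ∈ s, T i - ∑ i ∈ s, d i ∧ ∀ k, 0 ≤ P.coeff k := by
  have hd : ∀ i ∈ s, d i ≠ 0 := fun i hi => ne_zero_of_dvd_ne_zero (hT i hi) (hdT i hi)
  exact ⟨⟨_, (prod_one_sub_X_pow_mul_prod_geom_sum hdT).symm⟩, fun P hP =>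
    ⟨natDegree_of_prod_one_sub_X_pow_mul_eq hd hT hP,
      mem_nonnegCoeffs_of_prod_one_sub_X_pow_mul_eq hd hdT hP⟩⟩

end Products

/-- For positive integers `T1, T2, T3` with `gcd(T1,T2,T3) = 1`, the polynomial
`(1-X^d12)(1-X^d23)(1-X^d13)` divides `(1-X^T1)(1-X^T2)(1-X^T3)` in `ℤ[X]`, and the
quotient `P_3` has degree `T1+T2+T3-d12-d23-d13` and nonnegative coefficients. -/
theorem stmt_10 (T1 T2 T3 : ℕ) (h1 : 0 < T1) (h2 : 0 < T2) (h3 : 0 < T3)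
    (hgcd : Nat.gcd (Nat.gcd T1 T2) T3 = 1)
    (d12 d23 d13 : ℕ) (hd12 : d12 = Nat.gcd T1 T2) (hd23 : d23 = Nat.gcd T2 T3)
    (hd13 : d13 = Nat.gcd T1 T3) :
    ((1 - X ^ d12) * (1 - X ^ d23) * (1 - X ^ d13) : ℤ[X]) ∣
      (1 - X ^ T1) * (1 - X ^ T2) * (1 - X ^ T3) ∧
    ∀ P : ℤ[X],
      (1 - X ^ d12) * (1 - X ^ d23) * (1 - X ^ d13) * P =
        (1 - X ^ T1) * (1 - X ^ T2) * (1 - X ^ T3) →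
      P.natDegree = T1 + T2 + T3 - d12 - d23 - d13 ∧ ∀ k, 0 ≤ P.coeff k := by
  subst hd12 hd23 hd13
  simpa [Fin.prod_univ_three, Fin.sum_univ_three, Fin.forall_fin_succ, h1.ne', h2.ne', h3.ne',
    Nat.gcd_dvd_left, Nat.gcd_dvd_right, Nat.sub_sub, add_assoc] using
    stmt_10_general (R := ℤ) (s := .univ) (T := ![T1, T2, T3])
      (d := ![T1.gcd T2, T2.gcd T3, T1.gcd T3])
end

section
/- Let T1, T2, T3 be positive integers with gcd(T1,T2,T3) = 1, and suppose there exist distinct indices i ≠ j in {1,2,3} such that gcd(T_i,T_j) = 1 or gcd(T_i,T_j) = min(T_i,T_j). Then every coefficient c_k of P_3 with 0 ≤ k ≤ T1+T2+T3−d12−d23−d13 is strictly positive. -/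
open Polynomial

/-!
As soon as one of `d12`, `d23`, `d13` is `1`, say the one belonging to `a, b` among `a, b, c`, the
quotient is `∑_{i < c} X ^ i` times the geometric sums `(1 - X ^ a) / (1 - X ^ e)` and
`(1 - X ^ b) / (1 - X ^ f)`. Multiplying by a geometric sum in `X ^ e` superposes shifts by
multiples of `e`, which leaves no gap between blocks of at least `e` consecutive positive
coefficients; and `e, f ≤ c` because both divide `c`. If instead `gcd(a, b) = min(a, b)`, say
`a ∣ b`, then `gcd(a, c) = gcd(a, b, c) = 1`.
-/

section

variable {R : Type*}

/-- The polynomial `p` has nonnegative coefficients, and those of degree less than `N` are positive.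
Nonnegativity in all degrees keeps the notion stable under adding shifts. -/
structure PosBelow [Semiring R] [Preorder R] (N : ℕ) (p : R[X]) : Prop where
  nonneg (k : ℕ) : 0 ≤ p.coeff k
  pos {k : ℕ} (hk : k < N) : 0 < p.coeff k

theorem posBelow_one [Semiring R] [PartialOrder R] [ZeroLEOneClass R] [NeZero (1 : R)] :
    PosBelow 1 (1 : R[X]) where
  nonneg k := by
    rw [coeff_one]
    split_ifs
    exacts [zero_le_one, le_rfl]
  pos hk := by
    rw [Nat.lt_one_iff.mp hk, coeff_one_zero]
    exact zero_lt_one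

namespace PosBelow

theorem add_mul_X_pow [Semiring R] [PartialOrder R] [IsOrderedCancelAddMonoid R]
    {M N s : ℕ} {p q : R[X]} (hp : PosBelow N p) (hq : PosBelow M q) (hs : s ≤ N) :
    PosBelow (M + s) (p + q * X ^ s) where
  nonneg k := by
    rw [coeff_add, coeff_mul_X_pow']
    split_ifs
    · exact add_nonneg (hp.nonneg k) (hq.nonneg _)
    · exact add_nonneg (hp.nonneg k) le_rfl
  pos {k} hk := by
    rw [coeff_add, coeff_mul_X_pow']
    split_ifs with hsk
    · exact add_pos_of_nonneg_of_pos (hp.nonneg k) (hq.pos (by omega))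
    · exact add_pos_of_pos_of_nonneg (hp.pos (by omega)) le_rfl

theorem mul_geom_sum [Semiring R] [PartialOrder R] [IsOrderedCancelAddMonoid R]
    {N e : ℕ} {p : R[X]} (hp : PosBelow N p) (he : e ≤ N) (m : ℕ) :
    PosBelow (N + e * m) (p * ∑ i ∈ Finset.range (m + 1), (X ^ e) ^ i) := by
  induction m with
  | zero => simpa using hp
  | succ m ih =>
    rw [Finset.sum_range_succ, mul_add p, ← pow_mul]
    have hshift : e * (m + 1) ≤ N + e * m := by rw [mul_add_one]; omega
    exact ih.add_mul_X_pow hp hshift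

theorem exists_one_sub_X_pow_mul_eq [CommRing R] [PartialOrder R] [IsOrderedCancelAddMonoid R]
    {N e a : ℕ} {p : R[X]} (hp : PosBelow N p) (he : e ≤ N) (hea : e ∣ a) (ha : 0 < a) :
    ∃ q : R[X], (1 - X ^ e) * q = p * (1 - X ^ a) ∧ PosBelow (N + (a - e)) q := by
  obtain ⟨m, rfl⟩ := hea
  obtain ⟨m, rfl⟩ := Nat.exists_eq_add_one.mpr (Nat.pos_of_mul_pos_left ha)
  refine ⟨p * ∑ i ∈ Finset.range (m + 1), (X ^ e) ^ i, ?_, ?_⟩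
  · rw [mul_left_comm, mul_neg_geom_sum, pow_mul]
  · rw [mul_add_one, Nat.add_sub_cancel]
    exact hp.mul_geom_sum he m

end PosBelow

theorem isRegular_one_sub_X_pow [Ring R] {d : ℕ} (hd : 0 < d) :
    IsRegular (1 - X ^ d : R[X]) := by
  have hmonic : (X ^ d - C 1 : R[X]).Monic := monic_X_pow_sub_C 1 hd.ne'
  simpa using (isUnit_neg_one (α := R[X])).isRegular.mul hmonic.isRegular

theorem posBelow_of_one_sub_X_mul_eq [CommRing R] [PartialOrder R] [IsStrictOrderedRing R]
    {a b c e f : ℕ} (ha : 0 < a) (hb : 0 < b) (hea : e ∣ a) (hfb : f ∣ b) (hec : e ≤ c)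
    (hfc : f ≤ c) {P : R[X]}
    (hP : (1 - X) * (1 - X ^ e) * (1 - X ^ f) * P = (1 - X ^ a) * (1 - X ^ b) * (1 - X ^ c)) :
    PosBelow (c + (a - e) + (b - f)) P := by
  have he : 0 < e := Nat.pos_of_dvd_of_pos hea ha
  have hf : 0 < f := Nat.pos_of_dvd_of_pos hfb hb
  have hc : 0 < c := he.trans_le hec
  obtain ⟨p, hp_eq, hp⟩ :=
    (posBelow_one (R := R)).exists_one_sub_X_pow_mul_eq le_rfl (one_dvd c) hc
  rw [Nat.add_sub_cancel' hc] at hp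
  obtain ⟨q, hq_eq, hq⟩ := hp.exists_one_sub_X_pow_mul_eq hec hea ha
  obtain ⟨r, hr_eq, hr⟩ := hq.exists_one_sub_X_pow_mul_eq (hfc.trans (c.le_add_right _)) hfb hb
  have hregular : IsRegular ((1 - X ^ 1) * (1 - X ^ e) * (1 - X ^ f) : R[X]) :=
    ((isRegular_one_sub_X_pow one_pos).mul (isRegular_one_sub_X_pow he)).mul
      (isRegular_one_sub_X_pow hf)
  have hPr : P = r := hregular.left <| by
    linear_combination hP - (1 - X) * (1 - X ^ e) * hr_eq - (1 - X) * (1 - X ^ b) * hq_eq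
      - (1 - X ^ a) * (1 - X ^ b) * hp_eq
  exact hPr ▸ hr

end

theorem gcd_eq_one_or_gcd_eq_one_of_gcd_eq_min {a b c : ℕ} (h : Nat.gcd (Nat.gcd a b) c = 1)
    (hmin : Nat.gcd a b = min a b) : Nat.gcd a c = 1 ∨ Nat.gcd b c = 1 := by
  rcases min_choice a b with hab | hab <;> rw [hmin, hab] at h
  · exact .inl h
  · exact .inr h

theorem exists_pair_gcd_eq_one {a b c : ℕ} (h : Nat.gcd (Nat.gcd a b) c = 1)
    (hpair : (Nat.gcd a b = 1 ∨ Nat.gcd a b = min a b) ∨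
      (Nat.gcd b c = 1 ∨ Nat.gcd b c = min b c) ∨ (Nat.gcd a c = 1 ∨ Nat.gcd a c = min a c)) :
    Nat.gcd a b = 1 ∨ Nat.gcd b c = 1 ∨ Nat.gcd a c = 1 := by
  have hbca : Nat.gcd (Nat.gcd b c) a = 1 := by rwa [Nat.gcd_comm, ← Nat.gcd_assoc]
  have hacb : Nat.gcd (Nat.gcd a c) b = 1 := by rwa [Nat.gcd_right_comm]
  rcases hpair with (hab | hab) | (hbc | hbc) | (hac | hac)
  · exact .inl hab
  · exact .inr (gcd_eq_one_or_gcd_eq_one_of_gcd_eq_min h hab).symm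
  · exact .inr (.inl hbc)
  · have := gcd_eq_one_or_gcd_eq_one_of_gcd_eq_min hbca hbc
    rw [Nat.gcd_comm b a, Nat.gcd_comm c a] at this
    exact this.imp_right .inr
  · exact .inr (.inr hac)
  · have := gcd_eq_one_or_gcd_eq_one_of_gcd_eq_min hacb hac
    rw [Nat.gcd_comm c b] at this
    exact this.imp_right .inl

theorem stmt_12_general {R : Type*} [CommRing R] [PartialOrder R] [IsStrictOrderedRing R]
    {T1 T2 T3 d12 d23 d13 : ℕ} (h1 : 0 < T1) (h2 : 0 < T2) (h3 : 0 < T3)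
    (hd12 : d12 ∣ T1 ∧ d12 ∣ T2) (hd23 : d23 ∣ T2 ∧ d23 ∣ T3) (hd13 : d13 ∣ T1 ∧ d13 ∣ T3)
    (hone : d12 = 1 ∨ d23 = 1 ∨ d13 = 1) {P : R[X]}
    (hP : (1 - X ^ d12) * (1 - X ^ d23) * (1 - X ^ d13) * P =
      (1 - X ^ T1) * (1 - X ^ T2) * (1 - X ^ T3)) :
    ∀ k ≤ T1 + T2 + T3 - d12 - d23 - d13, 0 < P.coeff k := by
  intro k hk
  have le12 := And.intro (Nat.le_of_dvd h1 hd12.1) (Nat.le_of_dvd h2 hd12.2)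
  have le23 := And.intro (Nat.le_of_dvd h2 hd23.1) (Nat.le_of_dvd h3 hd23.2)
  have le13 := And.intro (Nat.le_of_dvd h1 hd13.1) (Nat.le_of_dvd h3 hd13.2)
  rcases hone with rfl | rfl | rfl
  · exact (posBelow_of_one_sub_X_mul_eq h1 h2 hd13.1 hd23.1 le13.2 le23.2
      (by linear_combination hP)).pos (by omega)
  · exact (posBelow_of_one_sub_X_mul_eq h2 h3 hd12.2 hd13.2 le12.1 le13.1
      (by linear_combination hP)).pos (by omega)
  · exact (posBelow_of_one_sub_X_mul_eq h1 h3 hd12.1 hd23.2 le12.2 le23.1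
      (by linear_combination hP)).pos (by omega)

/-- If some pair of distinct indices satisfies `gcd(T_i,T_j) = 1` or
`gcd(T_i,T_j) = min(T_i,T_j)`, then every coefficient `c_k` of the quotient
polynomial `P_3` with `0 ≤ k ≤ T1+T2+T3-d12-d23-d13` is strictly positive. -/
theorem stmt_12 (T1 T2 T3 : ℕ) (h1 : 0 < T1) (h2 : 0 < T2) (h3 : 0 < T3)
    (hgcd : Nat.gcd (Nat.gcd T1 T2) T3 = 1)
    (d12 d23 d13 : ℕ) (hd12 : d12 = Nat.gcd T1 T2) (hd23 : d23 = Nat.gcd T2 T3)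
    (hd13 : d13 = Nat.gcd T1 T3)
    (hpair : (d12 = 1 ∨ d12 = min T1 T2) ∨ (d23 = 1 ∨ d23 = min T2 T3) ∨
      (d13 = 1 ∨ d13 = min T1 T3))
    (P : ℤ[X])
    (hP : (1 - X ^ d12) * (1 - X ^ d23) * (1 - X ^ d13) * P =
      (1 - X ^ T1) * (1 - X ^ T2) * (1 - X ^ T3)) :
    ∀ k ≤ T1 + T2 + T3 - d12 - d23 - d13, 0 < P.coeff k := by
  subst hd12 hd23 hd13
  exact stmt_12_general h1 h2 h3 (Nat.gcd_dvd _ _) (Nat.gcd_dvd _ _) (Nat.gcd_dvd _ _)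
    (exists_pair_gcd_eq_one hgcd hpair) hP
end

section
/- Let T1, T2 be positive integers with d := gcd(T1,T2) satisfying d < T2 < T1, and set m = T2/d and T = T1+T2−d. Then for every integer k with 0 ≤ k ≤ T−1, the coefficient of X^k in the quotient polynomial P_2 = (1−X^{T1})(1−X^{T2})/((1−X)(1−X^d)) equals min(⌊k/d⌋+1, m, ⌊(T−1−k)/d⌋+1); that is, the coefficient sequence of P_2 is 1^d 2^d ⋯ (m−1)^d m^{T1−T2+d} (m−1)^d ⋯ 2^d 1^d, where a^b denotes b consecutive occurrences of the value a. -/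
open Polynomial

/-!
Cancelling the geometric sums, `P_2 = (1 + X + ⋯ + X^(T1-1)) (1 + X^d + ⋯ + X^(d(m-1)))`, so the
coefficient of `X^k` counts the `j < m` with `d j ≤ k < d j + T1`. As `d ∣ T1`, this count depends
only on `q = ⌊k/d⌋`: the admissible `j` form the interval `q + 1 - T1/d ≤ j < min m (q + 1)`.
-/

section Quotient

variable {R : Type*} [CommRing R]

theorem isRegular_one_sub_X_mul_one_sub_X_pow {d : ℕ} (hd : d ≠ 0) :
    IsRegular ((1 - X) * (1 - X ^ d) : R[X]) := by
  have hmonic : ((X - C 1) * (X ^ d - C 1) : R[X]).Monic :=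
    (monic_X_sub_C 1).mul (monic_X_pow_sub_C 1 hd)
  convert hmonic.isRegular using 1
  rw [C_1]
  ring

theorem eq_geom_sum_mul_geom_sum_of_mul_eq {d : ℕ} (hd : d ≠ 0) (N m : ℕ) {P : R[X]}
    (hP : (1 - X) * (1 - X ^ d) * P = (1 - X ^ N) * (1 - X ^ (d * m))) :
    P = (∑ i ∈ Finset.range N, X ^ i) * ∑ j ∈ Finset.range m, X ^ (d * j) := by
  refine (isRegular_one_sub_X_mul_one_sub_X_pow hd).left ?_
  calc (1 - X) * (1 - X ^ d) * P
      = (1 - X ^ N) * (1 - (X ^ d) ^ m) := by rw [hP, pow_mul]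
    _ = ((1 - X) * ∑ i ∈ Finset.range N, X ^ i) *
          ((1 - X ^ d) * ∑ j ∈ Finset.range m, (X ^ d) ^ j) := by simp only [mul_neg_geom_sum]
    _ = (1 - X) * (1 - X ^ d) *
          ((∑ i ∈ Finset.range N, X ^ i) * ∑ j ∈ Finset.range m, X ^ (d * j)) := by
        simp only [pow_mul]
        ring

end Quotient

section Coefficients

variable {R : Type*} [Semiring R]

theorem coeff_geom_sum_X (N k : ℕ) :
    (∑ i ∈ Finset.range N, (X : R[X]) ^ i).coeff k = if k < N then 1 else 0 := by
  simp only [finsetSum_coeff, coeff_X_pow, Finset.sum_ite_eq, Finset.mem_range]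

theorem coeff_geom_sum_mul_geom_sum (d N m k : ℕ) :
    ((∑ i ∈ Finset.range N, (X : R[X]) ^ i) * ∑ j ∈ Finset.range m, X ^ (d * j)).coeff k =
      (((Finset.range m).filter fun j => d * j ≤ k ∧ k < d * j + N).card : R) := by
  rw [Finset.mul_sum, finsetSum_coeff, Finset.card_filter, Nat.cast_sum]
  refine Finset.sum_congr rfl fun j _ => ?_
  rw [coeff_mul_X_pow', coeff_geom_sum_X, Nat.cast_ite, Nat.cast_one, Nat.cast_zero, ite_and]
  refine if_ctx_congr Iff.rfl (fun hjk => ?_) fun _ => rfl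
  simp only [tsub_lt_iff_left hjk]

end Coefficients

section Counting

variable {d : ℕ}

theorem filter_mul_le_lt_mul_add_eq_Ico (hd : 0 < d) (n m k : ℕ) :
    ((Finset.range m).filter fun j => d * j ≤ k ∧ k < d * j + d * n) =
      Finset.Ico (k / d + 1 - n) (min m (k / d + 1)) := by
  ext j
  have hlower : d * j ≤ k ↔ j ≤ k / d := by rw [Nat.le_div_iff_mul_le hd, mul_comm]
  have hupper : k < d * j + d * n ↔ k / d < j + n := by
    rw [← mul_add, Nat.div_lt_iff_lt_mul hd, mul_comm]
  simp only [Finset.mem_filter, Finset.mem_range, Finset.mem_Ico, hlower, hupper]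
  omega

theorem card_filter_mul_le_lt_mul_add (hd : 0 < d) {n m k : ℕ} (hmn : m ≤ n)
    (hk : k < d * (n + m - 1)) :
    ((Finset.range m).filter fun j => d * j ≤ k ∧ k < d * j + d * n).card =
      min (k / d + 1) (min m ((d * (n + m - 1) - 1 - k) / d + 1)) := by
  have hquot : k / d < n + m - 1 := Nat.div_lt_of_lt_mul hk
  have hreflect : (d * (n + m - 1) - 1 - k) / d = n + m - 1 - (k / d + 1) := by
    rw [Nat.sub_sub, Nat.add_comm 1 k, Nat.mul_sub_div _ _ _ hk]
  rw [filter_mul_le_lt_mul_add_eq_Ico hd, Nat.card_Ico, hreflect]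
  grind

end Counting

theorem stmt_14_general {R : Type*} [CommRing R] {T1 T2 d : ℕ} (hd : 0 < d) (hd1 : d ∣ T1)
    (hd2 : d ∣ T2) (hle : T2 ≤ T1) {P : R[X]}
    (hP : (1 - X) * (1 - X ^ d) * P = (1 - X ^ T1) * (1 - X ^ T2))
    {k : ℕ} (hk : k < T1 + T2 - d) :
    P.coeff k =
      ((min (k / d + 1) (min (T2 / d) ((T1 + T2 - d - 1 - k) / d + 1)) : ℕ) : R) := by
  obtain ⟨n, rfl⟩ := hd1
  obtain ⟨m, rfl⟩ := hd2
  have hmn : m ≤ n := Nat.le_of_mul_le_mul_left hle hd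
  have hT : d * n + d * m - d = d * (n + m - 1) := by rw [Nat.mul_sub, mul_add, mul_one]
  rw [hT] at hk ⊢
  rw [eq_geom_sum_mul_geom_sum_of_mul_eq hd.ne' _ m hP, coeff_geom_sum_mul_geom_sum,
    card_filter_mul_le_lt_mul_add hd hmn hk, Nat.mul_div_cancel_left m hd]

/-- If `d = gcd(T1,T2)` satisfies `d < T2 < T1`, `m = T2/d` and `T = T1+T2-d`, then
the coefficient of `X^k` (for `0 ≤ k ≤ T-1`) in the quotient polynomial
`P_2 = (1-X^T1)(1-X^T2)/((1-X)(1-X^d))` equals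
`min(⌊k/d⌋+1, m, ⌊(T-1-k)/d⌋+1)`, i.e. the coefficient sequence is
`1^d 2^d ⋯ (m-1)^d m^(T1-T2+d) (m-1)^d ⋯ 2^d 1^d`. -/
theorem stmt_14 (T1 T2 : ℕ) (h1 : 0 < T1) (h2 : 0 < T2)
    (d m T : ℕ) (hd : d = Nat.gcd T1 T2) (hdT : d < T2) (hTT : T2 < T1)
    (hm : m = T2 / d) (hT : T = T1 + T2 - d)
    (P : ℤ[X])
    (hP : (1 - X) * (1 - X ^ d) * P = (1 - X ^ T1) * (1 - X ^ T2)) :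
    ∀ k ≤ T - 1,
      P.coeff k = ((min (k / d + 1) (min m ((T - 1 - k) / d + 1)) : ℕ) : ℤ) := by
  subst hd hm hT
  exact fun k hk => stmt_14_general (Nat.gcd_pos_of_pos_left _ h1) (Nat.gcd_dvd_left _ _)
    (Nat.gcd_dvd_right _ _) hTT.le hP (by omega)
end

section
/- Let T1, T2 be positive integers, d = gcd(T1,T2), T = T1+T2−d, and define h_2 : ℝ → ℝ by h_2(t) = Σ_{j=0}^{T2/d − 1} 𝟙_{[jd, jd+T1)}(t), where 𝟙_{[a,b)} is the characteristic function of the interval [a,b). Then (i) ∫_0^T h_2(t) e^{2πi m t/(T1 T2)} dt = 0 for every nonzero integer m such that T1 divides m or T2 divides m, and (ii) h_2(t) > 0 for every t ∈ (0,T). -/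
open scoped Real

/-!
Write `T1 = a d`, `T2 = N d` and `z = e^(c d)`, where `c` is the frequency in the exponential. The
`j`-th window contributes `z ^ j (z ^ a - 1) / c` to the integral, so the whole integral is
`(1 + z + ⋯ + z ^ (N - 1)) (z ^ a - 1) / c`. If `T2 ∣ m` then `z ^ a = 1`. If `T1 ∣ m` then
`z ^ N = 1`, and since `z - 1` divides `z ^ a - 1`, the product is a multiple of `z ^ N - 1`.
For positivity, consecutive windows overlap or abut because `d ≤ T1`, so they cover `[0, T)`.
-/

/-- The number of windows `[j d, j d + L)`, `j < N`, that contain `t`: the function `h_2` of the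
theorem, for a real step `d` and a real window length `L`. -/
noncomputable def slidingWindowSum (d L : ℝ) (N : ℕ) (t : ℝ) : ℝ :=
  ∑ j ∈ Finset.range N, Set.indicator (Set.Ico (j * d) (j * d + L)) (fun _ => (1 : ℝ)) t

section Covering

variable {d L t : ℝ} {N : ℕ}

theorem exists_lt_mem_Ico_mul_add (hdL : d ≤ L) (hN : 1 ≤ N) (ht₀ : 0 ≤ t)
    (ht : t < N * d + L - d) : ∃ j < N, t ∈ Set.Ico (j * d) (j * d + L) := by
  induction N, hN using Nat.le_induction with
  | base => exact ⟨0, one_pos, by simpa using ht₀, by simpa using ht⟩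
  | succ N _ ih =>
    push_cast at ht
    rcases lt_or_ge t (N * d + L - d) with ht_lt | ht_ge
    · obtain ⟨j, hj, hmem⟩ := ih ht_lt
      exact ⟨j, hj.trans N.lt_succ_self, hmem⟩
    · exact ⟨N, N.lt_succ_self, by linarith, by linarith⟩

theorem slidingWindowSum_pos (hdL : d ≤ L) (hN : 1 ≤ N) (ht₀ : 0 ≤ t)
    (ht : t < N * d + L - d) : 0 < slidingWindowSum d L N t := by
  obtain ⟨j, hj, hmem⟩ := exists_lt_mem_Ico_mul_add hdL hN ht₀ ht
  refine Finset.sum_pos' (fun i _ => Set.indicator_nonneg (fun _ _ => zero_le_one) _)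
    ⟨j, Finset.mem_range.2 hj, ?_⟩
  rw [Set.indicator_of_mem hmem]
  exact one_pos

end Covering

section Integral

variable {E : Type*} [NormedAddCommGroup E] [NormedSpace ℝ E]

theorem intervalIntegral_indicator_Ico {f : ℝ → E} {a b s t : ℝ} (has : a ≤ s) (hst : s ≤ t)
    (htb : t ≤ b) : ∫ x in a..b, (Set.Ico s t).indicator f x = ∫ x in s..t, f x := by
  rw [intervalIntegral.integral_of_le (has.trans (hst.trans htb)),
    ← MeasureTheory.integral_Ico_eq_integral_Ioc,
    MeasureTheory.setIntegral_indicator measurableSet_Ico,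
    Set.inter_eq_self_of_subset_right (Set.Ico_subset_Ico has htb),
    MeasureTheory.integral_Ico_eq_integral_Ioc, ← intervalIntegral.integral_of_le hst]

theorem slidingWindowSum_smul (d L : ℝ) (N : ℕ) (f : ℝ → E) (t : ℝ) :
    slidingWindowSum d L N t • f t =
      ∑ j ∈ Finset.range N, (Set.Ico (j * d) (j * d + L)).indicator f t := by
  simp only [slidingWindowSum, Finset.sum_smul, ← Set.indicator_smul_apply_left, one_smul]

theorem integral_slidingWindowSum_smul {d L R : ℝ} {N : ℕ} (hd : 0 ≤ d) (hL : 0 ≤ L)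
    (hR : N * d + L - d ≤ R) {f : ℝ → E}
    (hf : IntervalIntegrable f MeasureTheory.volume 0 R) :
    ∫ t in 0..R, slidingWindowSum d L N t • f t =
      ∑ j ∈ Finset.range N, ∫ t in (j * d)..(j * d + L), f t := by
  simp only [slidingWindowSum_smul]
  rw [intervalIntegral.integral_finsetSum fun j _ =>
    intervalIntegrable_iff.2 (hf.def'.indicator measurableSet_Ico)]
  refine Finset.sum_congr rfl fun j hj => ?_
  have hjN : ((j : ℝ) + 1) * d ≤ N * d := by
    gcongr
    exact_mod_cast Finset.mem_range.1 hj
  exact intervalIntegral_indicator_Ico (by positivity) (by linarith) (by linarith)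

end Integral

section Exponential

variable {c : ℂ} {d L R : ℝ} {N : ℕ}

theorem integral_exp_mul_add_length (hc : c ≠ 0) (s L : ℝ) :
    ∫ t in s..(s + L), Complex.exp (c * t) =
      Complex.exp (c * s) * ((Complex.exp (c * L) - 1) / c) := by
  rw [integral_exp_mul_complex hc, Complex.ofReal_add, mul_add, Complex.exp_add]
  ring

theorem integral_slidingWindowSum_mul_exp (hc : c ≠ 0) (hd : 0 ≤ d) (hL : 0 ≤ L)
    (hR : N * d + L - d ≤ R) :
    ∫ t in 0..R, (slidingWindowSum d L N t : ℂ) * Complex.exp (c * t) =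
      (∑ j ∈ Finset.range N, Complex.exp (c * d) ^ j) * (Complex.exp (c * L) - 1) / c := by
  have hcont : Continuous fun t : ℝ => Complex.exp (c * t) := by fun_prop
  simp only [← Complex.real_smul]
  rw [integral_slidingWindowSum_smul hd hL hR (hcont.intervalIntegrable 0 R), mul_div_assoc,
    Finset.sum_mul]
  refine Finset.sum_congr rfl fun j _ => ?_
  rw [integral_exp_mul_add_length hc, ← Complex.exp_nat_mul]
  push_cast
  ring_nf

theorem geom_sum_mul_pow_sub_one_eq_zero {A : Type*} [CommRing A] {z : A} {n a : ℕ}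
    (hz : z ^ n = 1 ∨ z ^ a = 1) : (∑ j ∈ Finset.range n, z ^ j) * (z ^ a - 1) = 0 := by
  rcases hz with hn | ha
  · rw [← geom_sum_mul z a, mul_left_comm, geom_sum_mul, hn, sub_self, mul_zero]
  · rw [ha, sub_self, mul_zero]

theorem integral_slidingWindowSum_mul_exp_eq_zero {a : ℕ} (hc : c ≠ 0) (hd : 0 ≤ d)
    (hL : L = a * d) (hR : N * d + L - d ≤ R)
    (hperiod : Complex.exp (c * (N * d)) = 1 ∨ Complex.exp (c * L) = 1) :
    ∫ t in 0..R, (slidingWindowSum d L N t : ℂ) * Complex.exp (c * t) = 0 := by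
  have exp_mul_eq_pow (n : ℕ) : Complex.exp (c * (n * d)) = Complex.exp (c * d) ^ n := by
    rw [mul_left_comm, Complex.exp_nat_mul]
  have hLC : (L : ℂ) = a * d := by exact_mod_cast hL
  rw [integral_slidingWindowSum_mul_exp hc hd (hL ▸ by positivity) hR]
  rw [hLC, exp_mul_eq_pow] at hperiod ⊢
  rw [exp_mul_eq_pow] at hperiod
  rw [geom_sum_mul_pow_sub_one_eq_zero hperiod, zero_div]

theorem exp_two_pi_mul_I_mul_div_mul_eq_one_of_dvd {p : ℕ} {m : ℤ} {q : ℂ} (hp : p ≠ 0)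
    (hq : q ≠ 0) (hpm : (p : ℤ) ∣ m) :
    Complex.exp (2 * π * Complex.I * m / (p * q) * q) = 1 := by
  obtain ⟨k, rfl⟩ := hpm
  have hpC : (p : ℂ) ≠ 0 := Nat.cast_ne_zero.2 hp
  refine Complex.exp_eq_one_iff.2 ⟨k, ?_⟩
  push_cast
  field_simp

end Exponential

theorem stmt_15_general (T1 T2 : ℕ) (h1 : 0 < T1) (h2 : 0 < T2)
    (d T : ℕ) (hd1 : d ∣ T1) (hd2 : d ∣ T2) (hT : T = T1 + T2 - d)
    (h2f : ℝ → ℝ)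
    (hh2 : ∀ t : ℝ, h2f t = ∑ j ∈ Finset.range (T2 / d),
      Set.indicator (Set.Ico ((j : ℝ) * (d : ℝ)) ((j : ℝ) * (d : ℝ) + (T1 : ℝ)))
        (fun _ => (1 : ℝ)) t) :
    (∀ m : ℤ, m ≠ 0 → ((T1 : ℤ) ∣ m ∨ (T2 : ℤ) ∣ m) →
      ∫ t in (0:ℝ)..(T : ℝ), (h2f t : ℂ) *
        Complex.exp (2 * (π : ℂ) * Complex.I * (m : ℂ) * (t : ℂ) /
          ((T1 : ℂ) * (T2 : ℂ))) = 0) ∧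
    ∀ t ∈ Set.Ioo (0 : ℝ) (T : ℝ), 0 < h2f t := by
  obtain rfl : h2f = slidingWindowSum d T1 (T2 / d) := funext hh2
  have hdT1 : d ≤ T1 := Nat.le_of_dvd h1 hd1
  have hN : 1 ≤ T2 / d := Nat.div_pos (Nat.le_of_dvd h2 hd2) (Nat.pos_of_dvd_of_pos hd1 h1)
  have hT1 : (T1 : ℝ) = (T1 / d : ℕ) * d := mod_cast (Nat.div_mul_cancel hd1).symm
  have hT2 : ((T2 / d : ℕ) : ℝ) * d = T2 := mod_cast Nat.div_mul_cancel hd2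
  have hTR : (T : ℝ) = (T2 / d : ℕ) * d + T1 - d := by
    rw [hT2, hT, Nat.cast_sub (hdT1.trans (Nat.le_add_right _ _)), Nat.cast_add,
      add_comm (T2 : ℝ)]
  refine ⟨fun m hm hdvd => ?_, fun t ht =>
    slidingWindowSum_pos (mod_cast hdT1) hN ht.1.le (hTR ▸ ht.2)⟩
  have hT1C : (T1 : ℂ) ≠ 0 := Nat.cast_ne_zero.2 h1.ne'
  have hT2C : (T2 : ℂ) ≠ 0 := Nat.cast_ne_zero.2 h2.ne'
  have hc : 2 * π * Complex.I * m / (T1 * T2) ≠ 0 :=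
    div_ne_zero (mul_ne_zero Complex.two_pi_I_ne_zero (Int.cast_ne_zero.2 hm))
      (mul_ne_zero hT1C hT2C)
  simp only [mul_div_right_comm (2 * (π : ℂ) * Complex.I * m)]
  refine integral_slidingWindowSum_mul_exp_eq_zero hc d.cast_nonneg hT1 hTR.ge
    (hdvd.imp (fun hT1m => ?_) fun hT2m => ?_)
  · rw [Complex.ofReal_natCast, show ((T2 / d : ℕ) : ℂ) * d = T2 by exact_mod_cast hT2]
    exact exp_two_pi_mul_I_mul_div_mul_eq_one_of_dvd h1.ne' hT2C hT1m
  · rw [Complex.ofReal_natCast, mul_comm (T1 : ℂ) T2]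
    exact exp_two_pi_mul_I_mul_div_mul_eq_one_of_dvd h2.ne' hT1C hT2m

/-- Let `T1, T2` be positive integers, `d = gcd(T1,T2)`, `T = T1+T2-d`, and
`h_2(t) = Σ_{j=0}^{T2/d - 1} 𝟙_{[jd, jd+T1)}(t)`. Then
(i) `∫_0^T h_2(t) e^(2πimt/(T1T2)) dt = 0` for every nonzero integer `m` divisible
by `T1` or by `T2`, and (ii) `h_2 > 0` on `(0,T)`. -/
theorem stmt_15 (T1 T2 : ℕ) (h1 : 0 < T1) (h2 : 0 < T2)
    (d T : ℕ) (hd : d = Nat.gcd T1 T2) (hT : T = T1 + T2 - d)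
    (h2f : ℝ → ℝ)
    (hh2 : ∀ t : ℝ, h2f t = ∑ j ∈ Finset.range (T2 / d),
      Set.indicator (Set.Ico ((j : ℝ) * (d : ℝ)) ((j : ℝ) * (d : ℝ) + (T1 : ℝ)))
        (fun _ => (1 : ℝ)) t) :
    (∀ m : ℤ, m ≠ 0 → ((T1 : ℤ) ∣ m ∨ (T2 : ℤ) ∣ m) →
      ∫ t in (0:ℝ)..(T : ℝ), (h2f t : ℂ) *
        Complex.exp (2 * (π : ℂ) * Complex.I * (m : ℂ) * (t : ℂ) /
          ((T1 : ℂ) * (T2 : ℂ))) = 0) ∧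
    ∀ t ∈ Set.Ioo (0 : ℝ) (T : ℝ), 0 < h2f t :=
  stmt_15_general T1 T2 h1 h2 d T (hd ▸ Nat.gcd_dvd_left T1 T2) (hd ▸ Nat.gcd_dvd_right T1 T2)
    hT h2f hh2
end

section
/- Let T1, T2, T3, T4 be positive integers with gcd(T1,T2,T3,T4) = 1. Suppose there exist two distinct 3-element subsets S1 ≠ S2 of the index set {1,2,3,4} and two distinct 2-element subsets S3 ≠ S4 of {1,2,3,4} such that gcd{T_i : i ∈ S1} = gcd{T_i : i ∈ S3} and gcd{T_i : i ∈ S2} = gcd{T_i : i ∈ S4}. Then the rational function P_4(X) = [∏_{i=1}^{4}(1−X^{T_i})] · [∏_{3-element subsets S of {1,2,3,4}} (1−X^{gcd{T_i : i ∈ S}})] / ([∏_{2-element subsets S of {1,2,3,4}} (1−X^{gcd{T_i : i ∈ S}})] · (1−X)^2) is a polynomial with nonnegative coefficients. -/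
open Polynomial

/-!
Write `[n] = 1 - X ^ n`. If `m ∣ n` then `[n] / [m]` is a geometric sum, so it has nonnegative
coefficients; hence it suffices to pair the factors of the denominator with those of the numerator
along divisibilities. The factors of `S3` and `S4` are paired with those of `S1` and `S2`, and the
two factors `[gcd T]` with the two remaining triples. By Hall's theorem the four remaining pairs
have a system of distinct representatives, and each pair `S`, with representative `i`, is paired
with `[T i]`.
-/

section NonnegDvd

variable {R : Type*}

/-- `NonnegDvd p q` says that `q / p` is a polynomial with nonnegative coefficients. It is stated
multiplicatively, so that every polynomial is related to `0`. -/
def NonnegDvd [Semiring R] [PartialOrder R] (p q : R[X]) : Prop :=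
  ∃ r : R[X], p * r = q ∧ ∀ k, 0 ≤ r.coeff k

variable [PartialOrder R]

theorem NonnegDvd.refl [Semiring R] [ZeroLEOneClass R] (p : R[X]) : NonnegDvd p p := by
  refine ⟨1, mul_one p, fun k => ?_⟩
  rw [coeff_one]
  split_ifs
  exacts [zero_le_one, le_rfl]

theorem NonnegDvd.mul [CommSemiring R] [IsOrderedRing R] {p q p' q' : R[X]}
    (h : NonnegDvd p q) (h' : NonnegDvd p' q') : NonnegDvd (p * p') (q * q') := by
  obtain ⟨r, rfl, hr⟩ := h
  obtain ⟨r', rfl, hr'⟩ := h'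
  refine ⟨r * r', mul_mul_mul_comm p p' r r', fun k => ?_⟩
  rw [coeff_mul]
  exact Finset.sum_nonneg fun x _ => mul_nonneg (hr x.1) (hr' x.2)

theorem NonnegDvd.prod [CommSemiring R] [IsOrderedRing R] {ι : Type*} {s : Finset ι}
    {p q : ι → R[X]} (h : ∀ i ∈ s, NonnegDvd (p i) (q i)) :
    NonnegDvd (∏ i ∈ s, p i) (∏ i ∈ s, q i) := by
  induction s using Finset.cons_induction with
  | empty => exact .refl 1
  | cons i s hi ih =>
    rw [Finset.prod_cons, Finset.prod_cons]
    exact (h i (Finset.mem_cons_self i s)).mul (ih fun j hj => h j (Finset.mem_cons_of_mem hj))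

theorem nonnegDvd_one_sub_X_pow [Ring R] [IsOrderedRing R] {m n : ℕ} (h : m ∣ n) :
    NonnegDvd (1 - X ^ m : R[X]) (1 - X ^ n) := by
  obtain ⟨k, rfl⟩ := h
  refine ⟨∑ i ∈ Finset.range k, (X ^ m) ^ i, by rw [mul_neg_geom_sum, pow_mul], fun j => ?_⟩
  rw [finsetSum_coeff]
  refine Finset.sum_nonneg fun i _ => ?_
  rw [← pow_mul, coeff_X_pow]
  split_ifs
  exacts [zero_le_one, le_rfl]

theorem nonnegDvd_one_sub_X_pow_pow_card [CommRing R] [IsOrderedRing R] {ι : Type*}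
    {s : Finset ι} {d : ℕ} {f : ι → ℕ} (h : ∀ i ∈ s, d ∣ f i) :
    NonnegDvd ((1 - X ^ d : R[X]) ^ s.card) (∏ i ∈ s, (1 - X ^ f i)) := by
  rw [← Finset.prod_const]
  exact .prod fun i hi => nonnegDvd_one_sub_X_pow (h i hi)

end NonnegDvd

section DistinctRepresentatives

open Finset

theorem choose_le_self_of_le_succ {n r : ℕ} (hr : r ≠ 0) (hn : n ≤ r + 1) : n.choose r ≤ n := by
  rcases hn.lt_or_eq with hlt | rfl
  · rcases (Nat.lt_succ_iff.mp hlt).lt_or_eq with hlt' | rfl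
    · simp [Nat.choose_eq_zero_of_lt hlt']
    · rw [Nat.choose_self]
      exact Nat.one_le_iff_ne_zero.mpr hr
  · exact (Nat.choose_succ_self_right r).le

variable {ι κ : Type*} {t : κ → Finset ι} {r : ℕ}

theorem card_le_choose_card_biUnion [DecidableEq ι] (ht : t.Injective)
    (hcard : ∀ k, #(t k) = r) (s : Finset κ) : #s ≤ (#(s.biUnion t)).choose r := by
  rw [← card_powersetCard]
  exact card_le_card_of_injOn t
    (fun k hk => mem_powersetCard.mpr ⟨subset_biUnion_of_mem t hk, hcard k⟩) ht.injOn

-- A union of `u ≤ r + 1` points contains at most `u.choose r ≤ u` of the sets, and a larger union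
-- has at least as many points as there are sets, so Hall's condition holds.
theorem exists_injective_mem_of_card_le_add_two [Fintype κ] (hr : r ≠ 0) (ht : t.Injective)
    (hcard : ∀ k, #(t k) = r) (hκ : Fintype.card κ ≤ r + 2) :
    ∃ f : κ → ι, f.Injective ∧ ∀ k, f k ∈ t k := by
  classical
  refine (all_card_le_biUnion_card_iff_exists_injective t).mp fun s => ?_
  rcases le_or_gt (#(s.biUnion t)) (r + 1) with hsmall | hlarge
  · exact (card_le_choose_card_biUnion ht hcard s).trans (choose_le_self_of_le_succ hr hsmall)
  · exact (s.card_le_univ.trans hκ).trans hlarge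

theorem nonnegDvd_prod_one_sub_X_pow_gcd {R : Type*} [CommRing R] [PartialOrder R]
    [IsOrderedRing R] [Fintype ι] (T : ι → ℕ) {𝒜 : Finset (Finset ι)} (hr : r ≠ 0)
    (hsized : ∀ S ∈ 𝒜, #S = r) (h𝒜 : #𝒜 = Fintype.card ι) (hι : Fintype.card ι ≤ r + 2) :
    NonnegDvd (∏ S ∈ 𝒜, (1 - X ^ S.gcd T) : R[X]) (∏ i, (1 - X ^ T i)) := by
  have hcard : Fintype.card 𝒜 = Fintype.card ι := (Fintype.card_coe 𝒜).trans h𝒜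
  obtain ⟨f, hf, hmem⟩ := exists_injective_mem_of_card_le_add_two hr
    (Subtype.val_injective (p := (· ∈ 𝒜))) (fun S => hsized S S.2) (hcard.trans_le hι)
  have hbij : f.Bijective := (Fintype.bijective_iff_injective_and_card f).mpr ⟨hf, hcard⟩
  rw [← hbij.prod_comp, ← prod_coe_sort]
  exact .prod fun S _ => nonnegDvd_one_sub_X_pow (gcd_dvd (hmem S))

end DistinctRepresentatives

section Main

open Finset

theorem card_erase_erase_powersetCard_univ {ι : Type*} [Fintype ι] [DecidableEq ι] {r : ℕ}
    {S S' : Finset ι} (hS : #S = r) (hS' : #S' = r) (hne : S ≠ S') :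
    #(((powersetCard r univ).erase S).erase S') = (Fintype.card ι).choose r - 2 := by
  rw [card_erase_of_mem (mem_erase.mpr ⟨hne.symm, mem_powersetCard_univ.mpr hS'⟩),
    card_erase_of_mem (mem_powersetCard_univ.mpr hS), card_powersetCard, card_univ, Nat.sub_sub]

theorem prod_powersetCard_univ_eq_mul_mul {ι M : Type*} [Fintype ι] [DecidableEq ι]
    [CommMonoid M] {r : ℕ} {S S' : Finset ι} (hS : #S = r) (hS' : #S' = r) (hne : S ≠ S')
    (f : Finset ι → M) :
    ∏ U ∈ powersetCard r univ, f U =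
      f S * f S' * ∏ U ∈ ((powersetCard r univ).erase S).erase S', f U := by
  rw [mul_assoc, mul_prod_erase _ f (mem_erase.mpr ⟨hne.symm, mem_powersetCard_univ.mpr hS'⟩),
    mul_prod_erase _ f (mem_powersetCard_univ.mpr hS)]

theorem stmt_17_general {R ι : Type*} [CommRing R] [PartialOrder R] [IsOrderedRing R]
    [Fintype ι] (hι : Fintype.card ι = 4) (T : ι → ℕ) {S1 S2 S3 S4 : Finset ι}
    (hS1 : #S1 = 3) (hS2 : #S2 = 3) (hS12 : S1 ≠ S2)
    (hS3 : #S3 = 2) (hS4 : #S4 = 2) (hS34 : S3 ≠ S4)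
    (h31 : S3.gcd T ∣ S1.gcd T) (h42 : S4.gcd T ∣ S2.gcd T) :
    NonnegDvd
      ((∏ S ∈ powersetCard 2 univ, (1 - X ^ S.gcd T)) * (1 - X ^ univ.gcd T) ^ 2 : R[X])
      ((∏ i, (1 - X ^ T i)) * ∏ S ∈ powersetCard 3 univ, (1 - X ^ S.gcd T)) := by
  classical
  have pairs_dvd : NonnegDvd
      (∏ S ∈ ((powersetCard 2 univ).erase S3).erase S4, (1 - X ^ S.gcd T) : R[X])
      (∏ i, (1 - X ^ T i)) :=
    nonnegDvd_prod_one_sub_X_pow_gcd T two_ne_zero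
      (fun S hS => mem_powersetCard_univ.mp (mem_of_mem_erase (mem_of_mem_erase hS)))
      (by rw [card_erase_erase_powersetCard_univ hS3 hS4 hS34, hι]; rfl) hι.le
  have dvd_triples : NonnegDvd ((1 - X ^ univ.gcd T : R[X]) ^ 2)
      (∏ S ∈ ((powersetCard 3 univ).erase S1).erase S2, (1 - X ^ S.gcd T)) := by
    have hcard := card_erase_erase_powersetCard_univ hS1 hS2 hS12
    rw [hι, show Nat.choose 4 3 - 2 = 2 from rfl] at hcard
    rw [← hcard]
    exact nonnegDvd_one_sub_X_pow_pow_card fun S _ => gcd_mono S.subset_univ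
  rw [prod_powersetCard_univ_eq_mul_mul hS3 hS4 hS34,
    prod_powersetCard_univ_eq_mul_mul hS1 hS2 hS12, mul_assoc, mul_left_comm (∏ i, _)]
  exact ((nonnegDvd_one_sub_X_pow h31).mul (nonnegDvd_one_sub_X_pow h42)).mul
    (pairs_dvd.mul dvd_triples)

end Main

/-- Let `T : Fin 4 → ℕ` be positive integers with `gcd = 1`. If there are two
distinct 3-element index subsets `S1 ≠ S2` and two distinct 2-element index subsets
`S3 ≠ S4` with `gcd(S1) = gcd(S3)` and `gcd(S2) = gcd(S4)`, then the rational
function `P_4 = [∏ᵢ(1-X^(T i))] ⬝ [∏_{|S|=3}(1-X^(gcd S))] /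
([∏_{|S|=2}(1-X^(gcd S))] ⬝ (1-X)²)` is a polynomial with nonnegative
coefficients. -/
theorem stmt_17 (T : Fin 4 → ℕ) (hpos : ∀ i, 0 < T i)
    (hgcd : Finset.univ.gcd T = 1)
    (S1 S2 : Finset (Fin 4)) (hS1 : S1.card = 3) (hS2 : S2.card = 3)
    (hS12 : S1 ≠ S2)
    (S3 S4 : Finset (Fin 4)) (hS3 : S3.card = 2) (hS4 : S4.card = 2)
    (hS34 : S3 ≠ S4)
    (h13 : S1.gcd T = S3.gcd T) (h24 : S2.gcd T = S4.gcd T) :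
    ∃ P : ℤ[X],
      ((∏ S ∈ Finset.univ.filter (fun S : Finset (Fin 4) => S.card = 2),
          (1 - X ^ (S.gcd T))) * (1 - X) ^ 2) * P =
        (∏ i, (1 - X ^ (T i))) *
          ∏ S ∈ Finset.univ.filter (fun S : Finset (Fin 4) => S.card = 3),
            (1 - X ^ (S.gcd T)) ∧
      ∀ k, 0 ≤ P.coeff k := by
  simpa only [NonnegDvd, Finset.univ_filter_card_eq, hgcd, pow_one] using
    stmt_17_general (R := ℤ) (Fintype.card_fin 4) T hS1 hS2 hS12 hS3 hS4 hS34 h13.symm.dvd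
      h24.symm.dvd
end

section
/- Let a, b, c, d be pairwise coprime integers with 1 < a < b < c < d. Then the rational function P_4(X) = (1−X^a)(1−X^b)(1−X^c)(1−X^d)(1−X^{abc})(1−X^{abd})(1−X^{acd})(1−X^{bcd}) / ((1−X)^2 (1−X^{ab})(1−X^{ac})(1−X^{ad})(1−X^{bc})(1−X^{bd})(1−X^{cd})) is a polynomial which has at least one strictly positive coefficient and at least one strictly negative coefficient. -/
open Polynomial

/-!
For coprime `m` and `n` the quotient `(1 - Y)(1 - Y^(mn)) / ((1 - Y^m)(1 - Y^n))` is a polynomial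
in `Y`. Taking `(Y, m, n)` to be `(X^a, b, c)`, `(X^b, c, d)` and `(X^d, a, c)` accounts for every
factor of `P_4` except `(1 - X^c)(1 - X^(abd)) / (1 - X)^2`, which is itself a polynomial.

Modulo `X^(2c)` the factors with exponents at least `2c` disappear, so that `P_4` agrees with
`f (1 - X^c)(1 - X^d)`, where `f = (1 - X^a)(1 - X^b) / ((1 - X)^2 (1 - X^(ab)))` has nonnegative
coefficients `r k`, periodic in `k` with period `ab`, and nonzero exactly when `k` is congruent to
one of `0, ..., a + b - 2`. If no coefficient of `P_4` were negative, then `r i ≤ r (i + c)` for all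
`i < c`. If `c < ab`, this fails where the shift by `c` leaves the support of `r`. If `ab ≤ c`, it
holds for all `i`, and since `c` is invertible modulo `ab` it makes `r` constant, although
`r 0 > 0 = r (ab - 1)`.
-/

section Divisibility

open Finset

variable {R : Type*} [CommRing R]

lemma geom_sum_dvd_geom_sum (x : R) {m n : ℕ} (h : m ∣ n) :
    ∑ i ∈ range m, x ^ i ∣ ∑ i ∈ range n, x ^ i := by
  obtain ⟨k, rfl⟩ := h
  induction k with
  | zero => simp
  | succ k ih =>
    rw [Nat.mul_succ, sum_range_add]
    simp only [pow_add, ← mul_sum]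
    exact dvd_add ih (dvd_mul_left _ _)

lemma isCoprime_geom_sum (x : R) {m n : ℕ} (h : m.Coprime n) :
    IsCoprime (∑ i ∈ range m, x ^ i) (∑ i ∈ range n, x ^ i) := by
  obtain rfl | hn1 := eq_or_ne n 1
  · rw [geom_sum_one]
    exact isCoprime_one_right
  obtain rfl | hn0 := eq_or_ne n 0
  · rw [Nat.coprime_zero_right m |>.1 h, geom_sum_one]
    exact isCoprime_one_left
  obtain ⟨u, -, hu⟩ := Nat.exists_mul_mod_eq_one_of_coprime h (by lia)
  obtain ⟨p, hp⟩ := geom_sum_dvd_geom_sum x (dvd_mul_right m u)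
  obtain ⟨q, hq⟩ := geom_sum_dvd_geom_sum x (dvd_mul_right n (m * u / n))
  have hmu : m * u = n * (m * u / n) + 1 := by rw [← hu, Nat.div_add_mod]
  rw [hmu, geom_sum_succ, hq] at hp
  exact ⟨p, -(x * q), by linear_combination -hp⟩

lemma one_sub_pow_mul_one_sub_pow_dvd (x : R) {m n : ℕ} (h : m.Coprime n) :
    (1 - x ^ m) * (1 - x ^ n) ∣ (1 - x) * (1 - x ^ (m * n)) := by
  have hdvd := (isCoprime_geom_sum x h).mul_dvd
    (geom_sum_dvd_geom_sum x (dvd_mul_right m n)) (geom_sum_dvd_geom_sum x (dvd_mul_left n m))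
  simp only [← mul_neg_geom_sum]
  convert mul_dvd_mul_left ((1 - x) ^ 2) hdvd using 1 <;> ring

theorem prod_one_sub_pow_pairs_dvd_prod_one_sub_pow_triples (x : R) {a b c d : ℕ}
    (hac : a.Coprime c) (hbc : b.Coprime c) (hcd : c.Coprime d) :
    (1 - x) ^ 2 * (1 - x ^ (a * b)) * (1 - x ^ (a * c)) * (1 - x ^ (a * d)) *
        (1 - x ^ (b * c)) * (1 - x ^ (b * d)) * (1 - x ^ (c * d)) ∣
      (1 - x ^ a) * (1 - x ^ b) * (1 - x ^ c) * (1 - x ^ d) *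
        (1 - x ^ (a * b * c)) * (1 - x ^ (a * b * d)) * (1 - x ^ (a * c * d)) *
        (1 - x ^ (b * c * d)) := by
  have habc := one_sub_pow_mul_one_sub_pow_dvd (x ^ a) hbc
  have hbcd := one_sub_pow_mul_one_sub_pow_dvd (x ^ b) hcd
  have hacd := one_sub_pow_mul_one_sub_pow_dvd (x ^ d) hac
  have hrest := mul_dvd_mul (one_sub_dvd_one_sub_pow x c) (one_sub_dvd_one_sub_pow x (a * b * d))
  simp only [← pow_mul] at habc hbcd hacd
  convert mul_dvd_mul (mul_dvd_mul habc hbcd) (mul_dvd_mul hacd hrest) using 1 <;> ring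

end Divisibility

section Congruence

open scoped PowerSeries

variable {R : Type*} [CommRing R]

lemma pow_dvd_prod_one_sub_pow_sub_one (x : R) {M : ℕ} {s : Multiset ℕ} (hs : ∀ n ∈ s, M ≤ n) :
    x ^ M ∣ (s.map fun n => 1 - x ^ n).prod - 1 := by
  induction s using Multiset.induction with
  | empty => simp
  | cons n s ih =>
    rw [Multiset.forall_mem_cons] at hs
    rw [Multiset.map_cons, Multiset.prod_cons, sub_mul, one_mul, sub_right_comm]
    exact dvd_sub (ih hs.2) ((pow_dvd_pow x hs.1).mul_right _)

lemma dvd_sub_of_mul_eq_mul {z u v p q : R} (hu : z ∣ u - 1) (hv : z ∣ v - 1)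
    (h : u * p = v * q) : z ∣ p - q := by
  have heq : p - q = (v - 1) * q - (u - 1) * p := by linear_combination h
  rw [heq]
  exact dvd_sub (hv.mul_right q) (hu.mul_right p)

lemma coeff_eq_of_X_pow_dvd_sub {P : R[X]} {f : R⟦X⟧} {M c d k : ℕ}
    (hk : k < M) (hkcd : k < c + d)
    (h : PowerSeries.X ^ M ∣
      (P : R⟦X⟧) - f * (1 - PowerSeries.X ^ c) * (1 - PowerSeries.X ^ d)) :
    P.coeff k = f.coeff k - (if c ≤ k then f.coeff (k - c) else 0) -
      (if d ≤ k then f.coeff (k - d) else 0) := by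
  have hexpand : f * (1 - PowerSeries.X ^ c) * (1 - PowerSeries.X ^ d) =
      f - f * PowerSeries.X ^ c - f * PowerSeries.X ^ d + f * PowerSeries.X ^ (c + d) := by ring
  have hcoeff := PowerSeries.X_pow_dvd_iff.1 h k hk
  simpa only [hexpand, map_add, map_sub, PowerSeries.coeff_mul_X_pow', coeff_coe,
    hkcd.not_ge, if_false, add_zero, sub_eq_zero] using hcoeff

end Congruence

section BoxSumCount

open Finset
open scoped PowerSeries

/-- The number of ways to write the residue of `k` modulo `a * b` as `i + j` with `i < a` and
`j < b`. For `a, b > 1` these are the coefficients of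
`(1 - X^a)(1 - X^b) / ((1 - X)²(1 - X^(a * b)))`. -/
def boxSumCount (a b k : ℕ) : ℕ := #{p ∈ range a ×ˢ range b | p.1 + p.2 = k % (a * b)}

variable {a b : ℕ}

lemma boxSumCount_periodic (a b : ℕ) : Function.Periodic (boxSumCount a b) (a * b) := fun k => by
  simp only [boxSumCount, Nat.add_mod_right]

lemma boxSumCount_pos_iff (ha : 0 < a) (hb : 0 < b) (k : ℕ) :
    0 < boxSumCount a b k ↔ k % (a * b) + 1 < a + b := by
  simp only [boxSumCount, card_pos, Finset.Nonempty, mem_filter, mem_product, mem_range]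
  constructor
  · rintro ⟨p, hp⟩
    lia
  · intro hk
    exact ⟨(min (k % (a * b)) (a - 1), k % (a * b) - min (k % (a * b)) (a - 1)), by lia⟩

lemma coeff_geom_sum_mul_geom_sum_s18 {R : Type*} [Semiring R] (a b k : ℕ) :
    ((∑ i ∈ range a, X ^ i) * ∑ j ∈ range b, X ^ j : R[X]).coeff k =
      #{p ∈ range a ×ˢ range b | p.1 + p.2 = k} := by
  simp only [sum_mul_sum, ← sum_product', ← pow_add, finsetSum_coeff, coeff_X_pow, sum_boole,
    eq_comm]

lemma one_sub_X_pow_mul_mk_coeff_mod {R : Type*} [CommRing R] {p : R[X]} {N : ℕ}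
    (hp : p.degree < N) :
    (1 - PowerSeries.X ^ N) * PowerSeries.mk (fun k => p.coeff (k % N)) = (p : R⟦X⟧) := by
  ext k
  rw [sub_mul, one_mul, map_sub, PowerSeries.coeff_X_pow_mul', PowerSeries.coeff_mk, coeff_coe]
  split_ifs with hk
  · rw [PowerSeries.coeff_mk, ← Nat.mod_eq_sub_mod hk, sub_self,
      (degree_lt_iff_coeff_zero p N).1 hp k hk]
  · rw [Nat.mod_eq_of_lt (not_le.1 hk), sub_zero]

lemma one_sub_X_pow_mul_mk_boxSumCount {R : Type*} [CommRing R] (ha : 1 < a) (hb : 1 < b) :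
    (1 - PowerSeries.X) ^ 2 * (1 - PowerSeries.X ^ (a * b)) *
        PowerSeries.mk (fun k => (boxSumCount a b k : R)) =
      (1 - PowerSeries.X ^ a) * (1 - PowerSeries.X ^ b) := by
  set p : R[X] := (∑ i ∈ range a, X ^ i) * ∑ j ∈ range b, X ^ j
  have hdeg : p.degree < (a * b : ℕ) := by
    rw [degree_lt_iff_coeff_zero]
    intro k hk
    have : a + b ≤ a * b := Nat.add_le_mul ha hb
    rw [coeff_geom_sum_mul_geom_sum_s18, filter_false_of_mem, card_empty, Nat.cast_zero]
    simp only [mem_product, mem_range]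
    lia
  have hfold := one_sub_X_pow_mul_mk_coeff_mod hdeg
  simp only [p, coeff_geom_sum_mul_geom_sum_s18] at hfold
  have hp : (1 - X) ^ 2 * p = (1 - X ^ a) * (1 - X ^ b) := by
    rw [← mul_neg_geom_sum, ← mul_neg_geom_sum]
    ring
  have hpseries := congrArg Polynomial.toPowerSeries hp
  push_cast at hpseries
  rw [mul_assoc, ← hpseries]
  exact congrArg _ hfold

lemma le_of_periodic_of_forall_le_add {α : Type*} [Preorder α] {f : ℕ → α} {N c : ℕ}
    (hf : Function.Periodic f N) (hN : N ≠ 0) (hc : c.Coprime N) (h : ∀ i, f i ≤ f (i + c))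
    (i j : ℕ) : f i ≤ f j := by
  have hiter : ∀ m, f i ≤ f (i + c * m) := fun m => by
    induction m with
    | zero => simp
    | succ m ih => simpa only [Nat.mul_succ, add_assoc] using ih.trans (h _)
  obtain ⟨m, -, hm⟩ := Nat.exists_mul_mod_eq_of_coprime (j + (N - 1) * i) hc hN
  have hmod : (i + c * m) % N = j % N := by
    obtain ⟨n, rfl⟩ := Nat.exists_eq_succ_of_ne_zero hN
    rw [Nat.add_mod, hm, ← Nat.add_mod, Nat.succ_sub_one,
      show i + (j + n * i) = j + n.succ * i by rw [Nat.succ_mul]; ring, Nat.add_mul_mod_self_left]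
  rw [← hf.map_mod_nat j, ← hmod, hf.map_mod_nat]
  exact hiter m

lemma exists_boxSumCount_add_lt {c : ℕ} (ha : 1 < a) (hb : 1 < b) (hac : a < c) (hbc : b < c)
    (hac' : a.Coprime c) (hbc' : b.Coprime c) :
    ∃ i < c, boxSumCount a b (i + c) < boxSumCount a b i := by
  have hsum : a + b ≤ a * b := Nat.add_le_mul ha hb
  have hpos := boxSumCount_pos_iff (zero_lt_one.trans ha) (zero_lt_one.trans hb)
  obtain hc | hc := lt_or_ge c (a * b)
  · -- The truncated subtraction makes the witness `0` when `c` itself is outside the support.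
    refine ⟨a + b - 1 - c, by lia, ?_⟩
    have hvanish : boxSumCount a b (a + b - 1 - c + c) = 0 := by
      apply Nat.eq_zero_of_not_pos
      rw [hpos, Nat.mod_eq_of_lt (by lia)]
      lia
    rw [hvanish, hpos, Nat.mod_eq_of_lt (by lia)]
    lia
  · by_contra! hle
    have hle' : ∀ i, boxSumCount a b i ≤ boxSumCount a b (i + c) := fun i => by
      have := hle (i % (a * b)) ((Nat.mod_lt _ (by lia)).trans_le hc)
      simpa only [boxSumCount, Nat.mod_mod, Nat.mod_add_mod] using this
    have hlast : boxSumCount a b (a * b - 1) = 0 := by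
      apply Nat.eq_zero_of_not_pos
      rw [hpos, Nat.mod_eq_of_lt (by lia)]
      lia
    have hzero : 0 < boxSumCount a b 0 := by
      rw [hpos, Nat.zero_mod]
      lia
    exact (hzero.trans_le (le_of_periodic_of_forall_le_add (boxSumCount_periodic a b) (by lia)
      (hac'.mul_left hbc').symm hle' 0 _)).ne' hlast

end BoxSumCount

section Quotient

open scoped PowerSeries

variable {a b c d : ℕ} {P : ℤ[X]}

lemma X_pow_dvd_sub_mk_boxSumCount_mul (ha : 1 < a) (hb : 1 < b) (hc : 1 < c) (hcd : c ≤ d)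
    (hP : ((1 - X) ^ 2 * (1 - X ^ (a * b)) * (1 - X ^ (a * c)) * (1 - X ^ (a * d)) *
        (1 - X ^ (b * c)) * (1 - X ^ (b * d)) * (1 - X ^ (c * d))) * P =
        (1 - X ^ a) * (1 - X ^ b) * (1 - X ^ c) * (1 - X ^ d) *
          (1 - X ^ (a * b * c)) * (1 - X ^ (a * b * d)) * (1 - X ^ (a * c * d)) *
          (1 - X ^ (b * c * d))) :
    PowerSeries.X ^ (2 * c) ∣ (P : ℤ⟦X⟧) - PowerSeries.mk (fun k => (boxSumCount a b k : ℤ)) *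
      (1 - PowerSeries.X ^ c) * (1 - PowerSeries.X ^ d) := by
  have hden : ∀ n ∈ ({a * c, a * d, b * c, b * d, c * d} : Multiset ℕ), 2 * c ≤ n := by
    simp only [Multiset.insert_eq_cons, Multiset.forall_mem_cons, Multiset.mem_singleton, forall_eq]
    refine ⟨?_, ?_, ?_, ?_, ?_⟩ <;> nlinarith
  have hnum : ∀ n ∈ ({a * b * c, a * b * d, a * c * d, b * c * d} : Multiset ℕ), 2 * c ≤ n := by
    have hab : 2 ≤ a * b := by nlinarith
    have hac : 2 * c ≤ a * c := by nlinarith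
    have hbc : 2 * c ≤ b * c := by nlinarith
    simp only [Multiset.insert_eq_cons, Multiset.forall_mem_cons, Multiset.mem_singleton, forall_eq]
    refine ⟨?_, ?_, ?_, ?_⟩ <;> nlinarith
  have hne : ((1 - PowerSeries.X) ^ 2 * (1 - PowerSeries.X ^ (a * b)) : ℤ⟦X⟧) ≠ 0 := fun h => by
    simpa [show a ≠ 0 by lia, show b ≠ 0 by lia] using congrArg PowerSeries.constantCoeff h
  have hseries := one_sub_X_pow_mul_mk_boxSumCount (R := ℤ) ha hb
  have hPseries := congrArg Polynomial.toPowerSeries hP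
  push_cast at hPseries
  refine dvd_sub_of_mul_eq_mul (pow_dvd_prod_one_sub_pow_sub_one _ hden)
    (pow_dvd_prod_one_sub_pow_sub_one _ hnum) (mul_left_cancel₀ hne ?_)
  simp only [Multiset.insert_eq_cons, Multiset.map_cons, Multiset.map_singleton,
    Multiset.prod_cons, Multiset.prod_singleton]
  linear_combination hPseries - (1 - PowerSeries.X ^ c) * (1 - PowerSeries.X ^ d) *
    (1 - PowerSeries.X ^ (a * b * c)) * (1 - PowerSeries.X ^ (a * b * d)) *
    (1 - PowerSeries.X ^ (a * c * d)) * (1 - PowerSeries.X ^ (b * c * d)) * hseries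

lemma exists_coeff_neg_of_X_pow_dvd_sub (ha : 1 < a) (hb : 1 < b) (hac : a < c) (hbc : b < c)
    (hcd : c ≤ d) (hac' : a.Coprime c) (hbc' : b.Coprime c)
    (h : PowerSeries.X ^ (2 * c) ∣ (P : ℤ⟦X⟧) -
      PowerSeries.mk (fun k => (boxSumCount a b k : ℤ)) *
        (1 - PowerSeries.X ^ c) * (1 - PowerSeries.X ^ d)) :
    ∃ k, P.coeff k < 0 := by
  obtain ⟨i, hi, hlt⟩ := exists_boxSumCount_add_lt ha hb hac hbc hac' hbc'
  refine ⟨i + c, ?_⟩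
  rw [coeff_eq_of_X_pow_dvd_sub (by lia) (by lia) h, if_pos (Nat.le_add_left c i),
    Nat.add_sub_cancel]
  simp only [PowerSeries.coeff_mk]
  split_ifs <;> lia

end Quotient

theorem stmt_18_general (a b c d : ℕ) (ha : 1 < a) (hb : 1 < b) (hac : a < c) (hbc : b < c)
    (hcd : c ≤ d) (hac' : Nat.gcd a c = 1) (hbc' : Nat.gcd b c = 1) (hcd' : Nat.gcd c d = 1) :
    ∃ P : ℤ[X],
      ((1 - X) ^ 2 * (1 - X ^ (a * b)) * (1 - X ^ (a * c)) * (1 - X ^ (a * d)) *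
        (1 - X ^ (b * c)) * (1 - X ^ (b * d)) * (1 - X ^ (c * d))) * P =
        (1 - X ^ a) * (1 - X ^ b) * (1 - X ^ c) * (1 - X ^ d) *
          (1 - X ^ (a * b * c)) * (1 - X ^ (a * b * d)) * (1 - X ^ (a * c * d)) *
          (1 - X ^ (b * c * d)) ∧
      (∃ k, 0 < P.coeff k) ∧ (∃ k, P.coeff k < 0) := by
  obtain ⟨P, hP⟩ :=
    prod_one_sub_pow_pairs_dvd_prod_one_sub_pow_triples (X : ℤ[X]) hac' hbc' hcd'
  have hcong := X_pow_dvd_sub_mk_boxSumCount_mul ha hb (ha.trans hac) hcd hP.symm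
  refine ⟨P, hP.symm, ⟨0, ?_⟩,
    exists_coeff_neg_of_X_pow_dvd_sub ha hb hac hbc hcd hac' hbc' hcong⟩
  rw [coeff_eq_of_X_pow_dvd_sub (by lia) (by lia) hcong, if_neg (by lia), if_neg (by lia), sub_zero,
    sub_zero, PowerSeries.coeff_mk, Nat.cast_pos,
    boxSumCount_pos_iff (by lia) (by lia), Nat.zero_mod]
  lia

/-- For pairwise coprime integers `1 < a < b < c < d`, the rational function
`P_4 = (1-X^a)(1-X^b)(1-X^c)(1-X^d)(1-X^abc)(1-X^abd)(1-X^acd)(1-X^bcd) /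
((1-X)²(1-X^ab)(1-X^ac)(1-X^ad)(1-X^bc)(1-X^bd)(1-X^cd))` is a polynomial having
both a strictly positive and a strictly negative coefficient. -/
theorem stmt_18 (a b c d : ℕ) (ha : 1 < a) (hab : a < b) (hbc : b < c) (hcd : c < d)
    (hab' : Nat.gcd a b = 1) (hac : Nat.gcd a c = 1) (had : Nat.gcd a d = 1)
    (hbc' : Nat.gcd b c = 1) (hbd : Nat.gcd b d = 1) (hcd' : Nat.gcd c d = 1) :
    ∃ P : ℤ[X],
      ((1 - X) ^ 2 * (1 - X ^ (a * b)) * (1 - X ^ (a * c)) * (1 - X ^ (a * d)) *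
        (1 - X ^ (b * c)) * (1 - X ^ (b * d)) * (1 - X ^ (c * d))) * P =
        (1 - X ^ a) * (1 - X ^ b) * (1 - X ^ c) * (1 - X ^ d) *
          (1 - X ^ (a * b * c)) * (1 - X ^ (a * b * d)) * (1 - X ^ (a * c * d)) *
          (1 - X ^ (b * c * d)) ∧
      (∃ k, 0 < P.coeff k) ∧ (∃ k, P.coeff k < 0) := by
  exact stmt_18_general a b c d ha (ha.trans hab) (hab.trans hbc) hbc hcd.le hac hbc' hcd'
end

section
/- Let a and b be integers with 1 < a < b, and consider the formal power series P_0(X) = (1+X+⋯+X^{a−1})(1+X+⋯+X^{b−1}) · Σ_{k≥0} X^{kab}, with coefficients b_k (so P_0 = (1−X^a)(1−X^b)/((1−X)^2(1−X^{ab})) as a power series). Then for every k ≥ 0: (i) 0 ≤ b_k ≤ a; (ii) b_k = a if and only if the remainder r of k modulo ab satisfies a−1 ≤ r ≤ b−1; (iii) b_k = 0 if and only if the remainder r of k modulo ab satisfies a+b−1 ≤ r ≤ ab−1. -/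
/-!
The product of the two finite geometric sums has a trapezoidal coefficient sequence, which vanishes
from index `a + b - 1` on. As `a + b - 1 ≤ a * b`, multiplying by `∑ X ^ (j * (a * b))` repeats this
trapezoid periodically without overlaps. The value `a` is attained exactly on the plateau of the
trapezoid, and the value `0` exactly on the gaps between its copies.
-/

open Finset PowerSeries

/-- The trapezoidal sequence `1, 2, …, min a b, …, min a b, …, 2, 1, 0, 0, …`, whose `n`-th term is
the number of ways to write `n = i + j` with `i < a` and `j < b`. Truncated subtraction makes it
vanish for `n ≥ a + b - 1`. -/
def trapezoid (a b n : ℕ) : ℕ :=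
  min (min a b) (min (n + 1) (a + b - 1 - n))

section Trapezoid

lemma trapezoid_le_left (a b n : ℕ) : trapezoid a b n ≤ a :=
  (min_le_left _ _).trans (min_le_left a b)

variable {a b n : ℕ}

lemma trapezoid_eq_left_iff (ha : 0 < a) (hab : a ≤ b) :
    trapezoid a b n = a ↔ a - 1 ≤ n ∧ n ≤ b - 1 := by
  rw [trapezoid, min_eq_left hab, min_eq_left_iff, le_min_iff]
  omega

lemma trapezoid_eq_zero_iff (ha : 0 < a) (hb : 0 < b) :
    trapezoid a b n = 0 ↔ a + b - 1 ≤ n := by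
  rw [trapezoid]
  omega

lemma trapezoid_eq_zero_of_mul_le (hn : a * b ≤ n) : trapezoid a b n = 0 := by
  rcases a.eq_zero_or_pos with rfl | ha
  · simp [trapezoid]
  rcases b.eq_zero_or_pos with rfl | hb
  · simp [trapezoid]
  have hle : a + b ≤ a * b + 1 := by nlinarith
  rw [trapezoid_eq_zero_iff ha hb]
  omega

end Trapezoid

section Coefficients

variable {R : Type*} [Semiring R]

lemma coeff_mul_mk_dvd_of_coeff_eq_zero {m : ℕ} {Q : R⟦X⟧} (hQ : ∀ n, m ≤ n → coeff n Q = 0)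
    (k : ℕ) :
    coeff k (Q * PowerSeries.mk fun n => if m ∣ n then (1 : R) else 0) = coeff (k % m) Q := by
  rw [coeff_mul, sum_eq_single (k % m, k - k % m)]
  · simp [Nat.dvd_sub_mod]
  · rintro ⟨i, j⟩ hij hne
    rw [HasAntidiagonal.mem_antidiagonal] at hij
    rw [coeff_mk, mul_ite, mul_one, mul_zero, ite_eq_right_iff]
    rintro ⟨c, rfl⟩
    refine hQ i (le_of_not_gt fun hi => hne ?_)
    have hmod : k % m = i := by
      rw [← hij, Nat.add_mul_mod_self_left, Nat.mod_eq_of_lt hi]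
    rw [Prod.mk.injEq]
    omega
  · intro hnotMem
    exact absurd (HasAntidiagonal.mem_antidiagonal.2 (Nat.add_sub_of_le (Nat.mod_le k m))) hnotMem

lemma coeff_sum_range_X_pow (a n : ℕ) :
    coeff n (∑ i ∈ range a, (X : R⟦X⟧) ^ i) = if n < a then 1 else 0 := by
  simp [coeff_X_pow]

lemma coeff_sum_range_X_pow_mul_sum_range_X_pow (a b n : ℕ) :
    coeff n ((∑ i ∈ range a, (X : R⟦X⟧) ^ i) * ∑ i ∈ range b, (X : R⟦X⟧) ^ i) =
      trapezoid a b n := by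
  have filter_eq_Ico : {i ∈ range (n + 1) | i < a ∧ n - i < b} =
      Ico (n + 1 - b) (min a (n + 1)) := by
    ext i
    simp only [mem_filter, mem_range, mem_Ico]
    omega
  calc
    _ = ∑ i ∈ range (n + 1), if i < a ∧ n - i < b then (1 : R) else 0 := by
      simp only [coeff_mul, coeff_sum_range_X_pow, Nat.sum_antidiagonal_eq_sum_range_succ_mk,
        ite_zero_mul_ite_zero, mul_one]
    _ = (#(Ico (n + 1 - b) (min a (n + 1))) : R) := by rw [sum_boole, filter_eq_Ico]
    _ = _ := by
      rw [Nat.card_Ico, trapezoid]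
      congr 1
      omega

lemma coeff_sum_range_X_pow_mul_sum_range_X_pow_mul_mk_dvd (a b k : ℕ) :
    coeff k ((∑ i ∈ range a, (X : R⟦X⟧) ^ i) * (∑ i ∈ range b, (X : R⟦X⟧) ^ i) *
        PowerSeries.mk fun n => if a * b ∣ n then (1 : R) else 0) =
      trapezoid a b (k % (a * b)) := by
  rw [coeff_mul_mk_dvd_of_coeff_eq_zero _ k, coeff_sum_range_X_pow_mul_sum_range_X_pow]
  intro n hn
  rw [coeff_sum_range_X_pow_mul_sum_range_X_pow, trapezoid_eq_zero_of_mul_le hn, Nat.cast_zero]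

end Coefficients

/-- For integers `1 < a < b`, the coefficients `b_k` of the formal power series
`P_0 = (1+X+⋯+X^(a-1))(1+X+⋯+X^(b-1)) ⬝ Σ_{k≥0} X^(kab)` in `ℤ⟦X⟧` satisfy, with
`r = k % (ab)`: (i) `0 ≤ b_k ≤ a`; (ii) `b_k = a ↔ a-1 ≤ r ≤ b-1`;
(iii) `b_k = 0 ↔ a+b-1 ≤ r ≤ ab-1`. -/
theorem stmt_19 (a b : ℕ) (ha : 1 < a) (hb : a < b)
    (P0 : PowerSeries ℤ)
    (hP0 : P0 = (∑ i ∈ Finset.range a, (PowerSeries.X : PowerSeries ℤ) ^ i) *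
      (∑ i ∈ Finset.range b, (PowerSeries.X : PowerSeries ℤ) ^ i) *
      PowerSeries.mk (fun k => if a * b ∣ k then (1 : ℤ) else 0))
    (k : ℕ) :
    (0 ≤ PowerSeries.coeff k P0 ∧ PowerSeries.coeff k P0 ≤ (a : ℤ)) ∧
    (PowerSeries.coeff k P0 = (a : ℤ) ↔
      a - 1 ≤ k % (a * b) ∧ k % (a * b) ≤ b - 1) ∧
    (PowerSeries.coeff k P0 = 0 ↔
      a + b - 1 ≤ k % (a * b) ∧ k % (a * b) ≤ a * b - 1) := by
  have ha₀ : 0 < a := by omega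
  have hb₀ : 0 < b := by omega
  have hr : k % (a * b) ≤ a * b - 1 := Nat.le_pred_of_lt (Nat.mod_lt k (Nat.mul_pos ha₀ hb₀))
  rw [hP0, coeff_sum_range_X_pow_mul_sum_range_X_pow_mul_mk_dvd]
  refine ⟨⟨Int.natCast_nonneg _, ?_⟩, ?_, ?_⟩
  · exact_mod_cast trapezoid_le_left a b (k % (a * b))
  · rw [Nat.cast_inj, trapezoid_eq_left_iff ha₀ hb.le]
  · rw [Nat.cast_eq_zero, trapezoid_eq_zero_iff ha₀ hb₀, and_iff_left hr]
end
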